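/- (Bilinear de Leeuw, dimension restriction, including p < 1.) Let n ≥ 2, d < n, and let m ∈ C_b(ℝ^{2n}) be a bilinear multiplier from L^{p₁}(ℝⁿ)×L^{p₂}(ℝⁿ) to L^p(ℝⁿ), where 1 ≤ p₁,p₂ < ∞, 0 < p < ∞, 1/p₁+1/p₂=1/p. Fix η₁, η₂ ∈ ℝ^{n−d}. Then the restricted symbol m̃(ξ₁,ξ₂) := m(ξ₁,η₁,ξ₂,η₂) for ξ₁,ξ₂ ∈ ℝ^d is a bilinear multiplier from L^{p₁}(ℝ^d)×L^{p₂}(ℝ^d) to L^p(ℝ^d), with ‖m̃‖_{BM(ℝ^d)} ≤ 𝔠·‖m‖_{BM(ℝⁿ)}, where 𝔠 = B_{p₁}B_{p₂}/A_p² if p < 1 and 𝔠 = 1 if p ≥ 1. -/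

import Mathlib

/-!
The restriction estimate holds with constant `1` for every `p > 0`, and `cc p p₁ p₂ ≥ 1`.

For the estimate, let `C` be admissible for `m` on `ℝ^{d + d₁}`. Dilating and modulating the test
functions in the last `d₁` variables shows that `C` is admissible for the symbols
`m (ξ₁, η₁ + ε ζ₁) (ξ₂, η₂ + ε ζ₂)`: the Jacobians cancel by `1/p₁ + 1/p₂ = 1/p`
(`BMBound.affine`). As `ε → 0` these symbols converge pointwise and boundedly to the restricted
symbol, viewed as independent of `ζ₁, ζ₂`, and Fatou's lemma, valid for all `p > 0`, keeps `C`
admissible in the limit (`BMBound.of_tendsto`). Testing the limit on `f ⊗ φ` and `g ⊗ ψ`, with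
`φ = e^{-π|y|²/p₁}` and `ψ = e^{-π|y|²/p₂}`, makes the operator factor as
`B(f, g) ⊗ (φ ψ)`. These Gaussians give equality in Hölder's inequality, with
`‖φ ψ‖_p = ‖φ‖_{p₁} = ‖ψ‖_{p₂} = 1`, so `C` is admissible on `ℝ^d` (`BMBound.of_tensor`).

For `p < 1`, the inequality `1 ≤ cc p p₁ p₂` follows from `B_q ≥ 1` and `0 < A_q ≤ 1`. The bounds by
`1` come from a single Rademacher function. Khintchine's inequality itself is needed to know that the
infimum defining `B_q` is over a nonempty set and that `A_q` does not vanish; it is derived from the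
exponential moments of Rademacher sums, computed by conditioning on the first sign
(`integral_rsum_succ`).
-/

open MeasureTheory Filter Topology
open scoped ENNReal
noncomputable section

/-- The character `e^{2πi ξ·x}` on `ℝ^ι`. -/
noncomputable def rch {ι : Type} [Fintype ι] (ξ x : ι → ℝ) : ℂ :=
  Complex.exp (2 * Real.pi * Complex.I * ((∑ i, ξ i * x i : ℝ) : ℂ))

/-- The Fourier transform on `ℝ^ι`. -/
noncomputable def rft {ι : Type} [Fintype ι] (f : (ι → ℝ) → ℂ) (ξ : ι → ℝ) : ℂ :=
  ∫ x : ι → ℝ, (starRingEnd ℂ) (rch ξ x) * f x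

/-- The bilinear multiplier operator on `ℝ^ι`. -/
noncomputable def rBm {ι : Type} [Fintype ι] (m : (ι → ℝ) → (ι → ℝ) → ℂ)
    (f g : (ι → ℝ) → ℂ) (x : ι → ℝ) : ℂ :=
  ∫ ξ : ι → ℝ, ∫ η : ι → ℝ, rft f ξ * rft g η * m ξ η * rch (ξ + η) x

/-- `f ∈ SL¹(ℝ^ι)`. -/
def rSL1 {ι : Type} [Fintype ι] (f : (ι → ℝ) → ℂ) : Prop :=
  Integrable f ∧ Integrable (rft f)

/-- The `(L^{p₁}, L^{p₂}, L^p)` bilinear multiplier norm on `ℝ^ι`. -/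
noncomputable def rBMnorm (ι : Type) [Fintype ι] (p₁ p₂ p : ℝ)
    (m : (ι → ℝ) → (ι → ℝ) → ℂ) : ℝ≥0∞ :=
  sInf {C | ∀ f g : (ι → ℝ) → ℂ, rSL1 f → rSL1 g →
    eLpNorm (rBm m f g) (ENNReal.ofReal p) volume ≤
      C * eLpNorm f (ENNReal.ofReal p₁) volume * eLpNorm g (ENNReal.ofReal p₂) volume}
/-- The Rademacher system on `[0,1]`. -/
noncomputable def rademacher (j : ℕ) (t : ℝ) : ℝ := (-1 : ℝ) ^ (⌊t * 2 ^ (j + 1)⌋ : ℤ)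

/-- The best constant `A_q` in Khintchine's inequality
`A_q (∑ |α_j|²)^{1/2} ≤ ‖∑ α_j r_j‖_{L^q[0,1]}`. -/
noncomputable def khintchineA (q : ℝ) : ℝ :=
  sSup {A : ℝ | 0 ≤ A ∧ ∀ (N : ℕ) (α : Fin N → ℝ),
    A * (∑ j, α j ^ 2) ^ (1/2 : ℝ) ≤
      (∫ t in (0:ℝ)..1, |∑ j, α j * rademacher j t| ^ q) ^ (1/q)}

/-- The best constant `B_q` in Khintchine's inequality
`‖∑ α_j r_j‖_{L^q[0,1]} ≤ B_q (∑ |α_j|²)^{1/2}`. -/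
noncomputable def khintchineB (q : ℝ) : ℝ :=
  sInf {B : ℝ | 0 ≤ B ∧ ∀ (N : ℕ) (α : Fin N → ℝ),
    (∫ t in (0:ℝ)..1, |∑ j, α j * rademacher j t| ^ q) ^ (1/q) ≤
      B * (∑ j, α j ^ 2) ^ (1/2 : ℝ)}

/-- The constant `𝔠 = B_{p₁}B_{p₂}/A_p²` if `p < 1`, and `𝔠 = 1` otherwise. -/
noncomputable def cc (p p₁ p₂ : ℝ) : ℝ :=
  if p < 1 then khintchineB p₁ * khintchineB p₂ / (khintchineA p) ^ 2 else 1

/-! ### Admissible constants and characters -/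

/-- `C` is an admissible constant in the definition of the bilinear multiplier norm of `m`. -/
def BMBound (ι : Type) [Fintype ι] (p₁ p₂ p : ℝ) (m : (ι → ℝ) → (ι → ℝ) → ℂ) (C : ℝ≥0∞) : Prop :=
  ∀ f g : (ι → ℝ) → ℂ, rSL1 f → rSL1 g →
    eLpNorm (rBm m f g) (ENNReal.ofReal p) volume ≤
      C * eLpNorm f (ENNReal.ofReal p₁) volume * eLpNorm g (ENNReal.ofReal p₂) volume

section Basic

variable {ι κ : Type} [Fintype ι] [Fintype κ]

lemma rch_norm (ξ x : ι → ℝ) : ‖rch ξ x‖ = 1 := by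
  unfold rch
  rw [Complex.norm_exp]
  simp

lemma rch_add (ξ η x : ι → ℝ) : rch (ξ + η) x = rch ξ x * rch η x := by
  unfold rch
  rw [← Complex.exp_add]
  congr 1
  simp only [Pi.add_apply, add_mul, Finset.sum_add_distrib]
  push_cast
  ring

lemma rch_mul_comm (D ξ x : ι → ℝ) : rch (D * ξ) x = rch ξ (D * x) := by
  unfold rch
  congr 3
  refine Finset.sum_congr rfl fun i _ => ?_
  simp only [Pi.mul_apply]
  ring

lemma conj_rch_mul (ξ x : ι → ℝ) : (starRingEnd ℂ) (rch ξ x) * rch ξ x = 1 := by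
  rw [← Complex.normSq_eq_conj_mul_self, Complex.normSq_eq_norm_sq, rch_norm]
  simp

lemma rch_continuous : Continuous fun z : (ι → ℝ) × (ι → ℝ) => rch z.1 z.2 := by
  unfold rch
  fun_prop

lemma rch_sum (ξ x : ι ⊕ κ → ℝ) :
    rch ξ x = rch (ξ ∘ Sum.inl) (x ∘ Sum.inl) * rch (ξ ∘ Sum.inr) (x ∘ Sum.inr) := by
  unfold rch
  rw [← Complex.exp_add]
  congr 1
  simp only [Fintype.sum_sum_type, Function.comp]
  push_cast
  ring

/-! ### Measurability and dominated convergence for the bilinear operator -/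

/-- The integrand of the bilinear operator is integrable on the product of the frequency spaces. -/
lemma rBm_integrable {m : (ι → ℝ) → (ι → ℝ) → ℂ}
    (hmc : Continuous fun z : (ι → ℝ) × (ι → ℝ) => m z.1 z.2) {Cm : ℝ}
    (hmB : ∀ ξ η, ‖m ξ η‖ ≤ Cm) {f g : (ι → ℝ) → ℂ} (hf : rSL1 f) (hg : rSL1 g) (x : ι → ℝ) :
    Integrable (fun z : (ι → ℝ) × (ι → ℝ) =>
      rft f z.1 * rft g z.2 * m z.1 z.2 * rch (z.1 + z.2) x) (volume.prod volume) := by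
  have h := hf.2.mul_prod hg.2
  have hc : Continuous fun z : (ι → ℝ) × (ι → ℝ) => m z.1 z.2 * rch (z.1 + z.2) x :=
    hmc.mul (rch_continuous.comp (by fun_prop : Continuous fun z : (ι → ℝ) × (ι → ℝ) =>
      (z.1 + z.2, x)))
  refine (h.bdd_mul (c := Cm) hc.aestronglyMeasurable (ae_of_all _ fun z => ?_)).congr
    (ae_of_all _ fun z => ?_)
  · rw [norm_mul, rch_norm, mul_one]
    exact hmB _ _
  · simp only
    ring

lemma rBm_eq_prod {m : (ι → ℝ) → (ι → ℝ) → ℂ}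
    (hmc : Continuous fun z : (ι → ℝ) × (ι → ℝ) => m z.1 z.2) {Cm : ℝ}
    (hmB : ∀ ξ η, ‖m ξ η‖ ≤ Cm) {f g : (ι → ℝ) → ℂ} (hf : rSL1 f) (hg : rSL1 g) (x : ι → ℝ) :
    rBm m f g x = ∫ z : (ι → ℝ) × (ι → ℝ),
      rft f z.1 * rft g z.2 * m z.1 z.2 * rch (z.1 + z.2) x ∂(volume.prod volume) :=
  (integral_prod _ (rBm_integrable hmc hmB hf hg x)).symm

lemma rBm_integrand_le {m : (ι → ℝ) → (ι → ℝ) → ℂ} {Cm : ℝ}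
    (hmB : ∀ ξ η, ‖m ξ η‖ ≤ Cm) (f g : (ι → ℝ) → ℂ) (x : ι → ℝ) (z : (ι → ℝ) × (ι → ℝ)) :
    ‖rft f z.1 * rft g z.2 * m z.1 z.2 * rch (z.1 + z.2) x‖ ≤
      ‖rft f z.1 * rft g z.2‖ * Cm := by
  rw [norm_mul _ (rch _ _), rch_norm, mul_one, norm_mul _ (m _ _)]
  exact mul_le_mul_of_nonneg_left (hmB _ _) (norm_nonneg _)

lemma rBm_continuous {m : (ι → ℝ) → (ι → ℝ) → ℂ}
    (hmc : Continuous fun z : (ι → ℝ) × (ι → ℝ) => m z.1 z.2) {Cm : ℝ}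
    (hmB : ∀ ξ η, ‖m ξ η‖ ≤ Cm) {f g : (ι → ℝ) → ℂ} (hf : rSL1 f) (hg : rSL1 g) :
    Continuous (rBm m f g) := by
  rw [funext (rBm_eq_prod hmc hmB hf hg)]
  refine continuous_of_dominated (bound := fun z => ‖rft f z.1 * rft g z.2‖ * Cm)
    (fun x => (rBm_integrable hmc hmB hf hg x).aestronglyMeasurable)
    (fun x => ae_of_all _ (rBm_integrand_le hmB f g x))
    ((hf.2.mul_prod hg.2).norm.mul_const _) (ae_of_all _ fun z => ?_)
  exact continuous_const.mul (rch_continuous.comp (by fun_prop : Continuous fun x : ι → ℝ =>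
      (z.1 + z.2, x)))

/-- Admissible constants pass to pointwise limits of uniformly bounded symbols, by dominated
convergence on the frequency side and Fatou's lemma on the space side. -/
lemma BMBound.of_tendsto {p₁ p₂ p : ℝ} {C : ℝ≥0∞} {Cm : ℝ}
    {M : ℕ → (ι → ℝ) → (ι → ℝ) → ℂ} {m : (ι → ℝ) → (ι → ℝ) → ℂ}
    (hMc : ∀ n, Continuous fun z : (ι → ℝ) × (ι → ℝ) => M n z.1 z.2)
    (hMB : ∀ n ξ η, ‖M n ξ η‖ ≤ Cm)
    (hmc : Continuous fun z : (ι → ℝ) × (ι → ℝ) => m z.1 z.2)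
    (hmB : ∀ ξ η, ‖m ξ η‖ ≤ Cm)
    (hlim : ∀ ξ η, Tendsto (fun n => M n ξ η) atTop (𝓝 (m ξ η)))
    (hM : ∀ n, BMBound ι p₁ p₂ p (M n) C) : BMBound ι p₁ p₂ p m C := by
  intro f g hf hg
  refine (Lp.eLpNorm_lim_le_liminf_eLpNorm (f := fun n => rBm (M n) f g)
    (fun n => (rBm_continuous (hMc n) (hMB n) hf hg).aestronglyMeasurable) _
    (ae_of_all _ fun x => ?_)).trans ?_
  · simp only [rBm_eq_prod (hMc _) (hMB _) hf hg, rBm_eq_prod hmc hmB hf hg]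
    refine tendsto_integral_of_dominated_convergence (fun z => ‖rft f z.1 * rft g z.2‖ * Cm)
      (fun n => (rBm_integrable (hMc n) (hMB n) hf hg x).aestronglyMeasurable)
      ((hf.2.mul_prod hg.2).norm.mul_const _)
      (fun n => ae_of_all _ (rBm_integrand_le (hMB n) f g x)) (ae_of_all _ fun z => ?_)
    exact ((hlim z.1 z.2).const_mul _).mul_const _
  · refine (liminf_le_liminf (Eventually.of_forall fun n => hM n f g hf hg)).trans ?_
    simp

/-! ### Affine changes of frequency variables -/

/-- The coordinatewise dilation `x ↦ D * x` of `ℝ^ι`, as a measurable equivalence. -/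
def dil (D : ι → ℝ) (hD : ∀ i, D i ≠ 0) : (ι → ℝ) ≃ᵐ (ι → ℝ) where
  toFun x := D * x
  invFun x := D⁻¹ * x
  left_inv x := by ext i; simp [hD i]
  right_inv x := by ext i; simp [hD i]
  measurable_toFun := (by fun_prop : Continuous fun x : ι → ℝ => D * x).measurable
  measurable_invFun := (by fun_prop : Continuous fun x : ι → ℝ => D⁻¹ * x).measurable

lemma map_dil (D : ι → ℝ) (hD : ∀ i, D i ≠ 0) :
    Measure.map (dil D hD) volume = ENNReal.ofReal (|∏ i, D i|⁻¹) • (volume : Measure (ι → ℝ)) := by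
  classical
  have h0 : ∏ i, D i ≠ 0 := Finset.prod_ne_zero_iff.2 fun i _ => hD i
  have h := Real.smul_map_diagonal_volume_pi (D := D) (by rwa [Matrix.det_diagonal])
  have he : (⇑(Matrix.toLin' (Matrix.diagonal D))) = dil D hD := by
    ext x i
    simp [dil, Matrix.mulVec_diagonal]
  rw [he, Matrix.det_diagonal] at h
  conv_rhs => rw [← h]
  rw [smul_smul, ← ENNReal.ofReal_mul (by positivity), inv_mul_cancel₀ (abs_ne_zero.2 h0)]
  simp

lemma integral_affine (D : ι → ℝ) (hD : ∀ i, D i ≠ 0) (b : ι → ℝ) (h : (ι → ℝ) → ℂ) :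
    ∫ x, h (b + D * x) = ((|∏ i, D i|⁻¹ : ℝ) : ℂ) * ∫ x, h x := by
  have h1 := (dil D hD).measurableEmbedding.integral_map (μ := volume) (fun y => h (b + y))
  rw [map_dil, integral_smul_measure, integral_add_left_eq_self h b,
    ENNReal.toReal_ofReal (by positivity)] at h1
  rw [← Complex.real_smul, h1]
  rfl

lemma eLpNorm_dil (D : ι → ℝ) (hD : ∀ i, D i ≠ 0) (f : (ι → ℝ) → ℂ) {q : ℝ} (hq : 0 < q) :
    eLpNorm (fun x => f (D * x)) (ENNReal.ofReal q) volume =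
      ENNReal.ofReal (|∏ i, D i|⁻¹) ^ (1 / q) * eLpNorm f (ENNReal.ofReal q) volume := by
  have h := (dil D hD).measurableEmbedding.eLpNorm_map_measure (μ := volume) (g := f)
    (p := ENNReal.ofReal q)
  rw [map_dil, eLpNorm_smul_measure_of_ne_top ENNReal.ofReal_ne_top] at h
  rw [smul_eq_mul] at h
  have h2 : (1 / ENNReal.ofReal q).toReal = 1 / q := by
    simp [ENNReal.toReal_ofReal hq.le]
  rw [h2] at h
  exact h.symm

lemma integrable_dil (D : ι → ℝ) (hD : ∀ i, D i ≠ 0) {f : (ι → ℝ) → ℂ} (hf : Integrable f) :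
    Integrable (fun x => f (D * x)) := by
  have h := (dil D hD).measurableEmbedding.integrable_map_iff (μ := volume) (g := f)
  rw [map_dil] at h
  exact h.1 (hf.smul_measure ENNReal.ofReal_ne_top)

/-- The dilation by `D` followed by the modulation of frequency `b`. -/
def modDil (D b : ι → ℝ) (f : (ι → ℝ) → ℂ) (y : ι → ℝ) : ℂ := rch b y * f (D * y)

lemma rft_modDil (D : ι → ℝ) (hD : ∀ i, D i ≠ 0) (b : ι → ℝ) (f : (ι → ℝ) → ℂ) (w : ι → ℝ) :
    rft (modDil D b f) (b + D * w) = ((|∏ i, D i|⁻¹ : ℝ) : ℂ) * rft f w := by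
  unfold rft
  have h := integral_affine D hD 0 (fun x => (starRingEnd ℂ) (rch w x) * f x)
  rw [← h]
  congr 1
  ext y
  rw [modDil, rch_add, rch_mul_comm, map_mul, zero_add]
  linear_combination (starRingEnd ℂ) (rch w (D * y)) * f (D * y) * conj_rch_mul b y

lemma rSL1_modDil (D : ι → ℝ) (hD : ∀ i, D i ≠ 0) (b : ι → ℝ) {f : (ι → ℝ) → ℂ}
    (hf : rSL1 f) : rSL1 (modDil D b f) := by
  constructor
  · refine (integrable_dil D hD hf.1).bdd_mul (c := 1) ?_ (ae_of_all _ fun y => (rch_norm b y).le)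
    exact (rch_continuous.comp (by fun_prop : Continuous fun y : ι → ℝ => (b, y))).aestronglyMeasurable
  · have hD' : ∀ i, D⁻¹ i ≠ 0 := fun i => inv_ne_zero (hD i)
    have h1 := (integrable_dil D⁻¹ hD' (hf.2.const_mul ((|∏ i, D i|⁻¹ : ℝ) : ℂ))).comp_sub_right b
    refine h1.congr (ae_of_all _ fun ξ => ?_)
    simp only
    rw [← rft_modDil D hD b]
    congr 1
    ext i
    simp [hD i]

lemma rBm_modDil (D : ι → ℝ) (hD : ∀ i, D i ≠ 0) (b₁ b₂ : ι → ℝ) (m : (ι → ℝ) → (ι → ℝ) → ℂ)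
    (f g : (ι → ℝ) → ℂ) (x : ι → ℝ) :
    rBm m (modDil D b₁ f) (modDil D b₂ g) x =
      rch (b₁ + b₂) x * rBm (fun ξ η => m (b₁ + D * ξ) (b₂ + D * η)) f g (D * x) := by
  have h0 : ∏ i, D i ≠ 0 := Finset.prod_ne_zero_iff.2 fun i _ => hD i
  have hc : ((|∏ i, D i|⁻¹ : ℝ) : ℂ) ≠ 0 := by
    simpa using h0
  unfold rBm
  apply mul_left_cancel₀ hc
  apply mul_left_cancel₀ hc
  rw [← integral_affine D hD b₁, ← integral_const_mul, ← integral_const_mul,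
    ← integral_const_mul, ← integral_const_mul]
  congr 1
  ext w
  rw [← integral_affine D hD b₂, ← integral_const_mul, ← integral_const_mul,
    ← integral_const_mul]
  congr 1
  ext w'
  rw [rft_modDil D hD, rft_modDil D hD]
  have : rch (b₁ + D * w + (b₂ + D * w')) x = rch (b₁ + b₂) x * rch (w + w') (D * x) := by
    rw [← rch_mul_comm, ← rch_add]
    congr 1
    ring
  rw [this]
  ring

lemma eLpNorm_rch_mul (b : ι → ℝ) (f : (ι → ℝ) → ℂ) (q : ℝ≥0∞) :
    eLpNorm (fun y => rch b y * f y) q volume = eLpNorm f q volume :=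
  eLpNorm_congr_norm_ae (ae_of_all _ fun y => by rw [norm_mul, rch_norm, one_mul])

/-- Admissible constants are preserved by affine changes of the two frequency variables having the same diagonal linear part; the powers of the Jacobian cancel because of the
Hölder scaling of the exponents. -/
lemma BMBound.affine {p₁ p₂ p : ℝ} (h1 : 0 < p₁) (h2 : 0 < p₂) (hp : 0 < p)
    (hrel : 1/p₁ + 1/p₂ = 1/p) {C : ℝ≥0∞} {m : (ι → ℝ) → (ι → ℝ) → ℂ}
    (hm : BMBound ι p₁ p₂ p m C) (D : ι → ℝ) (hD : ∀ i, D i ≠ 0) (b₁ b₂ : ι → ℝ) :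
    BMBound ι p₁ p₂ p (fun ξ η => m (b₁ + D * ξ) (b₂ + D * η)) C := by
  intro f g hf hg
  have h := hm _ _ (rSL1_modDil D hD b₁ hf) (rSL1_modDil D hD b₂ hg)
  rw [funext (rBm_modDil D hD b₁ b₂ m f g), eLpNorm_rch_mul, eLpNorm_dil D hD _ hp] at h
  unfold modDil at h
  rw [eLpNorm_rch_mul, eLpNorm_rch_mul, eLpNorm_dil D hD _ h1, eLpNorm_dil D hD _ h2, ← hrel] at h
  have h0 : ∏ i, D i ≠ 0 := Finset.prod_ne_zero_iff.2 fun i _ => hD i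
  set c := ENNReal.ofReal (|∏ i, D i|⁻¹) with hcdef
  have hc0 : c ≠ 0 := by
    rw [hcdef, Ne, ENNReal.ofReal_eq_zero, not_le]
    positivity
  have hct : c ≠ ⊤ := ENNReal.ofReal_ne_top
  rw [show C * (c ^ (1 / p₁) * eLpNorm f (ENNReal.ofReal p₁) volume) *
      (c ^ (1 / p₂) * eLpNorm g (ENNReal.ofReal p₂) volume) = (c ^ (1 / p₁) * c ^ (1 / p₂)) *
      (C * eLpNorm f (ENNReal.ofReal p₁) volume * eLpNorm g (ENNReal.ofReal p₂) volume) by ring,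
    ← ENNReal.rpow_add _ _ hc0 hct] at h
  have hk0 : c ^ (1 / p₁ + 1 / p₂) ≠ 0 := by
    simp [ENNReal.rpow_eq_zero_iff, hc0, hct]
  have hkt : c ^ (1 / p₁ + 1 / p₂) ≠ ⊤ := ENNReal.rpow_ne_top_of_nonneg (by positivity) hct
  exact (ENNReal.mul_le_mul_iff_right hk0 hkt).1 h

end Basic

/-! ### Gaussians -/

section Gaussian

variable {κ : Type} [Fintype κ]

/-- The Gaussian `e^{-π a |y|²}` on `ℝ^κ`. -/
def gau (a : ℝ) (y : κ → ℝ) : ℂ := ((Real.exp (-(Real.pi * a) * ∑ i, y i ^ 2) : ℝ) : ℂ)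

lemma gau_mul_rch (a : ℝ) (w y : κ → ℝ) : gau a y * rch w y =
    Complex.exp (-((Real.pi * a : ℝ) : ℂ) * ∑ i, (y i : ℂ) ^ 2 +
      ∑ i, (2 * Real.pi * Complex.I * w i) * (y i : ℂ)) := by
  unfold gau rch
  rw [Complex.ofReal_exp, ← Complex.exp_add]
  congr 1
  push_cast
  rw [Finset.mul_sum (Finset.univ) (fun i => (w i : ℂ) * (y i : ℂ))]
  congr 1
  exact Finset.sum_congr rfl fun i _ => by ring

lemma integral_gau_mul_rch {a : ℝ} (ha : 0 < a) (w : κ → ℝ) :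
    ∫ y : κ → ℝ, gau a y * rch w y =
      (((a⁻¹ : ℝ) : ℂ) ^ (Fintype.card κ / 2 : ℂ)) * gau a⁻¹ w := by
  have hpi := Real.pi_pos
  have hpi0 : (Real.pi : ℂ) ≠ 0 := by exact_mod_cast hpi.ne'
  have ha0 : (a : ℂ) ≠ 0 := by exact_mod_cast ha.ne'
  simp_rw [gau_mul_rch]
  rw [GaussianFourier.integral_cexp_neg_mul_sum_add
    (by rw [Complex.ofReal_re]; positivity)]
  congr 1
  · congr 1
    push_cast
    field_simp
  · unfold gau
    rw [Complex.ofReal_exp]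
    congr 1
    push_cast
    rw [Finset.sum_div, Finset.mul_sum]
    refine Finset.sum_congr rfl fun i _ => ?_
    field_simp
    rw [Complex.I_sq]
    ring

lemma gau_continuous (a : ℝ) : Continuous (gau a : (κ → ℝ) → ℂ) := by
  unfold gau
  fun_prop

lemma gau_integrable {a : ℝ} (ha : 0 < a) : Integrable (gau a : (κ → ℝ) → ℂ) := by
  have hpi := Real.pi_pos
  have h := GaussianFourier.integrable_cexp_neg_mul_sum_add (ι := κ)
    (b := ((Real.pi * a : ℝ) : ℂ)) (by rw [Complex.ofReal_re]; positivity) 0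
  refine h.congr (ae_of_all _ fun y => ?_)
  simp [gau]

lemma rch_zero_left (y : κ → ℝ) : rch 0 y = 1 := by simp [rch]

lemma conj_rch (w y : κ → ℝ) : (starRingEnd ℂ) (rch w y) = rch (-w) y := by
  have h := conj_rch_mul w y
  have h2 : rch (-w) y * rch w y = 1 := by
    rw [← rch_add, neg_add_cancel, rch_zero_left]
  have h0 : rch w y ≠ 0 := by
    intro h0
    simp [h0] at h2
  exact mul_right_cancel₀ h0 (h.trans h2.symm)

lemma rft_gau {a : ℝ} (ha : 0 < a) (w : κ → ℝ) :
    rft (gau a) w = (((a⁻¹ : ℝ) : ℂ) ^ (Fintype.card κ / 2 : ℂ)) * gau a⁻¹ w := by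
  unfold rft
  simp_rw [conj_rch, mul_comm (rch _ _)]
  rw [integral_gau_mul_rch ha]
  simp [gau]

lemma rSL1_gau {a : ℝ} (ha : 0 < a) : rSL1 (gau a : (κ → ℝ) → ℂ) := by
  refine ⟨gau_integrable ha, ?_⟩
  rw [funext (rft_gau ha)]
  exact (gau_integrable (inv_pos.2 ha)).const_mul _

lemma gau_inversion {a : ℝ} (ha : 0 < a) (y : κ → ℝ) :
    ∫ w, rft (gau a) w * rch w y = gau a y := by
  have hsymm : ∀ w : κ → ℝ, rch w y = rch y w := fun w => by
    unfold rch
    congr 3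
    exact Finset.sum_congr rfl fun i _ => mul_comm _ _
  simp_rw [rft_gau ha, hsymm, mul_assoc]
  rw [integral_const_mul, integral_gau_mul_rch (inv_pos.2 ha), inv_inv, ← mul_assoc,
    ← Complex.mul_cpow_ofReal_nonneg (by positivity) ha.le, ← Complex.ofReal_mul,
    inv_mul_cancel₀ ha.ne']
  simp

lemma lintegral_gau_one : ∫⁻ y : κ → ℝ, ‖gau 1 y‖ₑ = 1 := by
  rw [← ofReal_integral_norm_eq_lintegral_enorm (gau_integrable one_pos)]
  have h := integral_gau_mul_rch one_pos (0 : κ → ℝ)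
  simp_rw [rch_zero_left, mul_one] at h
  have h2 : ∫ y : κ → ℝ, ‖gau 1 y‖ = 1 := by
    have h3 : ∀ y : κ → ℝ, gau 1 y = ((‖gau 1 y‖ : ℝ) : ℂ) := fun y => by
      unfold gau
      rw [Complex.norm_of_nonneg (Real.exp_pos _).le]
    rw [integral_congr_ae (ae_of_all _ h3), integral_complex_ofReal] at h
    have h4 : ((∫ y : κ → ℝ, ‖gau 1 y‖ : ℝ) : ℂ) = 1 := by
      rw [h]; simp [gau]
    exact_mod_cast h4
  rw [h2, ENNReal.ofReal_one]

/-- The Gaussians with parameter `1 / q` are normalised in `L^q`. Since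
`gau (1/p₁) * gau (1/p₂) = gau (1/p)`, they are extremal in Hölder's inequality. -/
lemma eLpNorm_gau {q : ℝ} (hq : 0 < q) :
    eLpNorm (gau (1 / q) : (κ → ℝ) → ℂ) (ENNReal.ofReal q) volume = 1 := by
  rw [eLpNorm_eq_lintegral_rpow_enorm_toReal (by simpa using hq) ENNReal.ofReal_ne_top,
    ENNReal.toReal_ofReal hq.le]
  have h : ∀ y : κ → ℝ, ‖gau (1 / q) y‖ₑ ^ q = ‖gau 1 y‖ₑ := fun y => by
    unfold gau
    rw [← ofReal_norm, ← ofReal_norm, Complex.norm_of_nonneg (Real.exp_pos _).le,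
      Complex.norm_of_nonneg (Real.exp_pos _).le, ENNReal.ofReal_rpow_of_nonneg (by positivity) hq.le,
      ← Real.exp_mul]
    congr 2
    field_simp
  rw [lintegral_congr h, lintegral_gau_one, ENNReal.one_rpow]

lemma gau_mul_gau (a b : ℝ) (y : κ → ℝ) : gau a y * gau b y = gau (a + b) y := by
  unfold gau
  rw [← Complex.ofReal_mul, ← Real.exp_add]
  congr 2
  ring

end Gaussian

/-! ### Tensor products -/

section Tensor

variable {ι κ : Type} [Fintype ι] [Fintype κ]

lemma integral_sum_mul (F : (ι → ℝ) → ℂ) (φ : (κ → ℝ) → ℂ) :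
    ∫ v : ι ⊕ κ → ℝ, F (v ∘ Sum.inl) * φ (v ∘ Sum.inr) = (∫ x, F x) * ∫ y, φ y := by
  rw [← integral_prod_mul]
  exact (volume_measurePreserving_sumPiEquivProdPi (fun _ : ι ⊕ κ => ℝ)).integral_comp'
    (fun z => F z.1 * φ z.2)

/-- The tensor product of functions on `ℝ^ι` and `ℝ^κ`. -/
def tens (F : (ι → ℝ) → ℂ) (φ : (κ → ℝ) → ℂ) (v : ι ⊕ κ → ℝ) : ℂ :=
  F (v ∘ Sum.inl) * φ (v ∘ Sum.inr)

lemma tens_integrable {F : (ι → ℝ) → ℂ} {φ : (κ → ℝ) → ℂ} (hF : Integrable F)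
    (hφ : Integrable φ) : Integrable (tens F φ) :=
  (volume_measurePreserving_sumPiEquivProdPi (fun _ : ι ⊕ κ => ℝ)).integrable_comp_of_integrable
    (hF.mul_prod hφ)

lemma eLpNorm_tens {F : (ι → ℝ) → ℂ} {φ : (κ → ℝ) → ℂ} (hF : AEStronglyMeasurable F volume)
    (hφ : AEStronglyMeasurable φ volume) {q : ℝ} (hq : 0 < q) :
    eLpNorm (tens F φ) (ENNReal.ofReal q) volume =
      eLpNorm F (ENNReal.ofReal q) volume * eLpNorm φ (ENNReal.ofReal q) volume := by
  have hq0 : ENNReal.ofReal q ≠ 0 := by simpa using hq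
  rw [eLpNorm_eq_lintegral_rpow_enorm_toReal hq0 ENNReal.ofReal_ne_top,
    eLpNorm_eq_lintegral_rpow_enorm_toReal hq0 ENNReal.ofReal_ne_top,
    eLpNorm_eq_lintegral_rpow_enorm_toReal hq0 ENNReal.ofReal_ne_top,
    ENNReal.toReal_ofReal hq.le, ← ENNReal.mul_rpow_of_nonneg _ _ (by positivity),
    ← lintegral_prod_mul (hF.enorm.pow_const _) (hφ.enorm.pow_const _)]
  congr 1
  have h := (volume_measurePreserving_sumPiEquivProdPi (fun _ : ι ⊕ κ => ℝ)).lintegral_comp_emb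
    (MeasurableEquiv.measurableEmbedding _) (fun z => ‖F z.1‖ₑ ^ q * ‖φ z.2‖ₑ ^ q)
  refine Eq.trans (lintegral_congr fun v => ?_) h
  rw [tens, enorm_mul, ENNReal.mul_rpow_of_nonneg _ _ hq.le]
  rfl

lemma rft_tens (F : (ι → ℝ) → ℂ) (φ : (κ → ℝ) → ℂ) : rft (tens F φ) = tens (rft F) (rft φ) := by
  ext ξ
  unfold rft tens
  rw [← integral_sum_mul]
  congr 1
  ext v
  rw [rch_sum, map_mul]
  ring

lemma rSL1_tens {F : (ι → ℝ) → ℂ} {φ : (κ → ℝ) → ℂ} (hF : rSL1 F) (hφ : rSL1 φ) :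
    rSL1 (tens F φ) :=
  ⟨tens_integrable hF.1 hφ.1, by rw [rft_tens]; exact tens_integrable hF.2 hφ.2⟩

lemma rBm_tens (m : (ι → ℝ) → (ι → ℝ) → ℂ) (f g : (ι → ℝ) → ℂ) (φ ψ : (κ → ℝ) → ℂ) :
    rBm (fun ξ η : ι ⊕ κ → ℝ => m (ξ ∘ Sum.inl) (η ∘ Sum.inl)) (tens f φ) (tens g ψ) =
      tens (rBm m f g) (fun y => (∫ w, rft φ w * rch w y) * ∫ w, rft ψ w * rch w y) := by
  ext v
  have hK : ∫ w : κ → ℝ, ∫ w' : κ → ℝ, rft φ w * rft ψ w' * rch (w + w') (v ∘ Sum.inr) =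
      (∫ w, rft φ w * rch w (v ∘ Sum.inr)) * ∫ w, rft ψ w * rch w (v ∘ Sum.inr) := by
    rw [← integral_mul_const]
    congr 1
    ext w
    rw [← integral_const_mul]
    congr 1
    ext w'
    rw [rch_add]
    ring
  simp only [tens]
  rw [← hK]
  unfold rBm
  rw [← integral_sum_mul]
  congr 1
  ext ξ
  rw [← integral_sum_mul, rft_tens, rft_tens]
  congr 1
  ext η
  simp only [tens]
  rw [rch_sum, show ((ξ + η) ∘ Sum.inl) = ξ ∘ Sum.inl + η ∘ Sum.inl from rfl,
    show ((ξ + η) ∘ Sum.inr) = ξ ∘ Sum.inr + η ∘ Sum.inr from rfl]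
  ring

/-- A symbol on `ℝ^{ι ⊕ κ}` that does not depend on the `κ`-frequencies bounds the underlying
symbol on `ℝ^ι` with the same constant: test on tensor products with Hölder extremal Gaussians. -/
lemma BMBound.of_tensor {p₁ p₂ p : ℝ} (h1 : 0 < p₁) (h2 : 0 < p₂) (hp : 0 < p)
    (hrel : 1/p₁ + 1/p₂ = 1/p) {C : ℝ≥0∞} {m : (ι → ℝ) → (ι → ℝ) → ℂ}
    (hmc : Continuous fun z : (ι → ℝ) × (ι → ℝ) => m z.1 z.2) {Cm : ℝ}
    (hmB : ∀ ξ η, ‖m ξ η‖ ≤ Cm)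
    (hm : BMBound (ι ⊕ κ) p₁ p₂ p (fun ξ η => m (ξ ∘ Sum.inl) (η ∘ Sum.inl)) C) :
    BMBound ι p₁ p₂ p m C := by
  intro f g hf hg
  have ha : 0 < 1 / p₁ := by positivity
  have hb : 0 < 1 / p₂ := by positivity
  have h := hm _ _ (rSL1_tens hf (rSL1_gau (κ := κ) ha)) (rSL1_tens hg (rSL1_gau (κ := κ) hb))
  rw [rBm_tens] at h
  simp_rw [gau_inversion ha, gau_inversion hb, gau_mul_gau, hrel] at h
  have hm := fun a : ℝ => (gau_continuous (κ := κ) a).aestronglyMeasurable (μ := volume)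
  rwa [eLpNorm_tens (rBm_continuous hmc hmB hf hg).aestronglyMeasurable (hm _) hp,
    eLpNorm_tens hf.1.1 (hm _) h1, eLpNorm_tens hg.1.1 (hm _) h2, eLpNorm_gau hp, eLpNorm_gau h1,
    eLpNorm_gau h2, mul_one, mul_one, mul_one] at h

end Tensor

/-! ### Freezing frequency variables -/

/-- Admissible constants are inherited when part of the frequency variables is frozen: as `ε → 0`,
the symbols `m (ξ₁, η₁ + ε ζ₁) (ξ₂, η₂ + ε ζ₂)` converge to the restricted symbol. -/
lemma BMBound.restrict {ι κ : Type} [Fintype ι] [Fintype κ] {p₁ p₂ p : ℝ}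
    (h1 : 0 < p₁) (h2 : 0 < p₂) (hp : 0 < p)
    (hrel : 1/p₁ + 1/p₂ = 1/p) {C : ℝ≥0∞} {m : (ι ⊕ κ → ℝ) → (ι ⊕ κ → ℝ) → ℂ}
    (hmc : Continuous fun z : (ι ⊕ κ → ℝ) × (ι ⊕ κ → ℝ) => m z.1 z.2) {Cm : ℝ}
    (hmB : ∀ ξ η, ‖m ξ η‖ ≤ Cm) (hm : BMBound (ι ⊕ κ) p₁ p₂ p m C) (η₁ η₂ : κ → ℝ) :
    BMBound ι p₁ p₂ p (fun ξ₁ ξ₂ => m (Sum.elim ξ₁ η₁) (Sum.elim ξ₂ η₂)) C := by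
  have hel : ∀ η : κ → ℝ, Continuous fun ξ : ι → ℝ => (Sum.elim ξ η : ι ⊕ κ → ℝ) := fun η => by
    refine continuous_pi fun i => ?_
    rcases i with i | i
    · exact continuous_apply i
    · exact continuous_const
  have hrc : Continuous fun z : (ι → ℝ) × (ι → ℝ) => m (Sum.elim z.1 η₁) (Sum.elim z.2 η₂) :=
    hmc.comp (((hel η₁).comp continuous_fst).prodMk ((hel η₂).comp continuous_snd))
  refine BMBound.of_tensor (κ := κ) h1 h2 hp hrel hrc (fun _ _ => hmB _ _) ?_
  let b : (κ → ℝ) → (ι ⊕ κ → ℝ) := fun η => Sum.elim 0 η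
  let D : ℕ → (ι ⊕ κ → ℝ) := fun n => Sum.elim (fun _ => 1) (fun _ => 1 / ((n : ℝ) + 1))
  have hD : ∀ n i, D n i ≠ 0 := by
    rintro n (i | i)
    · exact one_ne_zero
    · exact Nat.one_div_pos_of_nat.ne'
  have hlim : ∀ (η : κ → ℝ) (ξ : ι ⊕ κ → ℝ), Tendsto (fun n => b η + D n * ξ) atTop
      (𝓝 (Sum.elim (ξ ∘ Sum.inl) η)) := by
    intro η ξ
    rw [tendsto_pi_nhds]
    rintro (i | i)
    · simp [b, D]
    · have := (tendsto_one_div_add_atTop_nhds_zero_nat (𝕜 := ℝ)).mul_const (ξ (Sum.inr i))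
      have := this.const_add (η i)
      simpa [b, D] using this
  refine BMBound.of_tendsto (Cm := Cm) (M := fun n ξ η => m (b η₁ + D n * ξ) (b η₂ + D n * η))
    (fun n => ?_) (fun n ξ η => hmB _ _) ?_ (fun ξ η => hmB _ _) (fun ξ η => ?_)
    (fun n => hm.affine h1 h2 hp hrel (D n) (hD n) _ _)
  · exact hmc.comp (by fun_prop : Continuous fun z : (ι ⊕ κ → ℝ) × (ι ⊕ κ → ℝ) =>
      (b η₁ + D n * z.1, b η₂ + D n * z.2))
  · exact hrc.comp (by fun_prop : Continuous fun z : (ι ⊕ κ → ℝ) × (ι ⊕ κ → ℝ) =>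
      (z.1 ∘ Sum.inl, z.2 ∘ Sum.inl))
  · exact (hmc.tendsto _).comp ((hlim η₁ ξ).prodMk_nhds (hlim η₂ η))

/-! ### Khintchine's inequality -/

section Khintchine

lemma rademacher_eq (j : ℕ) (t : ℝ) : rademacher j t = 1 ∨ rademacher j t = -1 := by
  unfold rademacher
  rcases Int.even_or_odd ⌊t * 2 ^ (j + 1)⌋ with h | h
  · exact Or.inl h.neg_one_zpow
  · exact Or.inr h.neg_one_zpow

lemma abs_rademacher (j : ℕ) (t : ℝ) : |rademacher j t| = 1 := by
  rcases rademacher_eq j t with h | h <;> simp [h]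

lemma measurable_rademacher (j : ℕ) : Measurable (rademacher j) := by
  unfold rademacher
  exact (measurable_of_countable fun k : ℤ => (-1 : ℝ) ^ k).comp
    (Int.measurable_floor.comp (measurable_id.mul_const _))

lemma rademacher_add_one (j : ℕ) (t : ℝ) : rademacher j (t + 1) = rademacher j t := by
  unfold rademacher
  have h : ⌊(t + 1) * 2 ^ (j + 1)⌋ = ⌊t * 2 ^ (j + 1)⌋ + 2 ^ (j + 1) := by
    rw [← Int.floor_add_intCast]
    congr 1
    push_cast
    ring
  have he : Even ((2 : ℤ) ^ (j + 1)) := (even_two).pow_of_ne_zero (by omega)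
  rw [h, zpow_add₀ (by norm_num), he.neg_one_zpow, mul_one]

lemma rademacher_succ_half (j : ℕ) (t : ℝ) : rademacher (j + 1) (t / 2) = rademacher j t := by
  unfold rademacher
  congr 2
  ring

lemma rademacher_zero_half (t : ℝ) : rademacher 0 (t / 2) = (-1) ^ ⌊t⌋ := by
  unfold rademacher
  congr 2
  ring

/-- The Rademacher sum with coefficients `α`. -/
def rsum {N : ℕ} (α : Fin N → ℝ) (t : ℝ) : ℝ := ∑ j, α j * rademacher j t

lemma rsum_intervalIntegrable {N : ℕ} (α : Fin N → ℝ) {Φ : ℝ → ℝ} (hΦ : Continuous Φ) (a b : ℝ) :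
    IntervalIntegrable (fun t => Φ (rsum α t)) volume a b := by
  have hmeas : Measurable (rsum α) :=
    Finset.measurable_sum _ fun j _ => (measurable_rademacher j).const_mul _
  have hb : ∀ t, rsum α t ∈ Set.Icc (-∑ j, |α j|) (∑ j, |α j|) := fun t => by
    rw [Set.mem_Icc, ← abs_le]
    refine (Finset.abs_sum_le_sum_abs _ _).trans (Finset.sum_le_sum fun j _ => ?_)
    rw [abs_mul, abs_rademacher, mul_one]
  obtain ⟨C, hC⟩ := isCompact_Icc.exists_bound_of_continuousOn
    (hΦ.continuousOn (s := Set.Icc (-∑ j, |α j|) (∑ j, |α j|)))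
  rw [intervalIntegrable_iff]
  exact Measure.integrableOn_of_bounded (M := C) (by simp)
    (hΦ.measurable.comp hmeas).aestronglyMeasurable (ae_of_all _ fun t => hC _ (hb t))

lemma rsum_half {N : ℕ} (α : Fin (N + 1) → ℝ) (t : ℝ) :
    rsum α (t / 2) = α 0 * (-1) ^ ⌊t⌋ + rsum (Fin.tail α) t := by
  unfold rsum
  rw [Fin.sum_univ_succ, Fin.val_zero, rademacher_zero_half]
  congr 1
  refine Finset.sum_congr rfl fun j _ => ?_
  rw [Fin.val_succ, rademacher_succ_half]
  rfl

lemma rsum_add_one {N : ℕ} (α : Fin N → ℝ) (t : ℝ) : rsum α (t + 1) = rsum α t := by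
  unfold rsum
  simp_rw [rademacher_add_one]

/-- The first Rademacher function is an independent sign: the self-similarity
`r_{j+1}(t/2) = r_j(t)` lets one condition on it. -/
lemma integral_rsum_succ {N : ℕ} (α : Fin (N + 1) → ℝ) {Φ : ℝ → ℝ} (hΦ : Continuous Φ) :
    ∫ t in (0:ℝ)..1, Φ (rsum α t) = 1 / 2 * ∫ t in (0:ℝ)..1,
      (Φ (α 0 + rsum (Fin.tail α) t) + Φ (-α 0 + rsum (Fin.tail α) t)) := by
  have h1 : ∫ t in (0:ℝ)..1, Φ (rsum α t) = 1 / 2 * ∫ t in (0:ℝ)..2, Φ (rsum α (t / 2)) := by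
    rw [intervalIntegral.integral_comp_div (fun t => Φ (rsum α t)) two_ne_zero, zero_div,
      div_self two_ne_zero, smul_eq_mul, ← mul_assoc]
    norm_num
  have hint : ∀ a b : ℝ, IntervalIntegrable (fun t => Φ (rsum α (t / 2))) volume a b := by
    intro a b
    have := IntervalIntegrable.comp_mul_left (rsum_intervalIntegrable α hΦ (a / 2) (b / 2))
      (c := 1 / 2)
    simpa [div_eq_inv_mul] using this
  have h2 : ∫ t in (1:ℝ)..2, Φ (rsum α (t / 2)) =
      ∫ t in (0:ℝ)..1, Φ (rsum α ((t + 1) / 2)) := by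
    rw [intervalIntegral.integral_comp_add_right (fun t => Φ (rsum α (t / 2)))]
    norm_num
  rw [h1, ← intervalIntegral.integral_add_adjacent_intervals (hint 0 1) (hint 1 2), h2,
    intervalIntegral.integral_add
      (rsum_intervalIntegrable (Fin.tail α) (Φ := fun x => Φ (α 0 + x)) (by fun_prop) 0 1)
      (rsum_intervalIntegrable (Fin.tail α) (Φ := fun x => Φ (-α 0 + x)) (by fun_prop) 0 1)]
  congr 2
  all_goals
    refine intervalIntegral.integral_congr_ae ?_
    filter_upwards [Measure.ae_ne volume (1 : ℝ)] with t ht1 ht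
    rw [Set.uIoc_of_le zero_le_one] at ht
    have hfl : ⌊t⌋ = 0 := Int.floor_eq_zero_iff.2 ⟨ht.1.le, lt_of_le_of_ne ht.2 ht1⟩
    rw [rsum_half]
  · simp [hfl]
  · simp [hfl, rsum_add_one]

lemma integral_exp_rsum_le {N : ℕ} (α : Fin N → ℝ) :
    ∫ t in (0:ℝ)..1, Real.exp (rsum α t) ≤ Real.exp ((∑ j, α j ^ 2) / 2) := by
  induction N with
  | zero => simp [rsum]
  | succ N ih =>
    rw [integral_rsum_succ α Real.continuous_exp]
    have h : ∀ t, Real.exp (α 0 + rsum (Fin.tail α) t) + Real.exp (-α 0 + rsum (Fin.tail α) t) =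
        (2 * Real.cosh (α 0)) * Real.exp (rsum (Fin.tail α) t) := fun t => by
      rw [Real.exp_add, Real.exp_add, Real.cosh_eq]
      ring
    simp_rw [h]
    rw [intervalIntegral.integral_const_mul, Fin.sum_univ_succ, add_div, Real.exp_add]
    have h2 := mul_le_mul (Real.cosh_le_exp_half_sq (α 0)) (ih (Fin.tail α))
      (intervalIntegral.integral_nonneg zero_le_one fun t _ => (Real.exp_pos _).le)
      (Real.exp_pos _).le
    refine le_trans (le_of_eq ?_) h2
    ring

lemma integral_sq_rsum {N : ℕ} (α : Fin N → ℝ) :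
    ∫ t in (0:ℝ)..1, rsum α t ^ 2 = ∑ j, α j ^ 2 := by
  induction N with
  | zero => simp [rsum]
  | succ N ih =>
    rw [integral_rsum_succ α (continuous_pow 2)]
    have h : ∀ t, (α 0 + rsum (Fin.tail α) t) ^ 2 + (-α 0 + rsum (Fin.tail α) t) ^ 2 =
        2 * α 0 ^ 2 + 2 * rsum (Fin.tail α) t ^ 2 := fun t => by ring
    simp_rw [h]
    rw [intervalIntegral.integral_add (by simp)
      (rsum_intervalIntegrable (Fin.tail α) (Φ := fun x => 2 * x ^ 2) (by fun_prop) 0 1),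
      intervalIntegral.integral_const_mul 2 fun t => rsum (Fin.tail α) t ^ 2, ih, Fin.sum_univ_succ]
    simp only [intervalIntegral.integral_const, Fin.tail]
    norm_num
    ring

/-- All moments of normalised Rademacher sums are bounded, since their exponential moments are. -/
lemma exists_moment_bound {q : ℝ} (hq : 0 < q) : ∃ K : ℝ, 0 < K ∧ ∀ (N : ℕ) (α : Fin N → ℝ),
    ∑ j, α j ^ 2 = 1 → ∫ t in (0:ℝ)..1, |rsum α t| ^ q ≤ K := by
  obtain ⟨n, hn⟩ := exists_nat_ge q
  have hpt : ∀ x : ℝ, |x| ^ q ≤ n.factorial * Real.exp 1 * (Real.exp x + Real.exp (-x)) := by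
    intro x
    have h0 := abs_nonneg x
    calc |x| ^ q ≤ (1 + |x|) ^ q := Real.rpow_le_rpow h0 (by linarith) hq.le
      _ ≤ (1 + |x|) ^ (n : ℝ) := Real.rpow_le_rpow_of_exponent_le (by linarith) hn
      _ = (1 + |x|) ^ n := Real.rpow_natCast _ _
      _ ≤ n.factorial * Real.exp (1 + |x|) := by
        have := Real.pow_div_factorial_le_exp (1 + |x|) (by linarith) n
        rwa [div_le_iff₀ (by positivity), mul_comm] at this
      _ = n.factorial * Real.exp 1 * Real.exp |x| := by rw [Real.exp_add]; ring
      _ ≤ _ := by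
        refine mul_le_mul_of_nonneg_left ?_ (by positivity)
        have := Real.exp_pos x
        have := Real.exp_pos (-x)
        rcases abs_cases x with h | h <;> rw [h.1] <;> linarith
  refine ⟨n.factorial * Real.exp 1 * (Real.exp (1 / 2) + Real.exp (1 / 2)), by positivity,
    fun N α hα => ?_⟩
  have hcq : Continuous fun x : ℝ => |x| ^ q :=
    continuous_abs.rpow_const fun _ => Or.inr hq.le
  refine (intervalIntegral.integral_mono_on zero_le_one (rsum_intervalIntegrable α hcq 0 1)
    (rsum_intervalIntegrable α (Φ := fun x => n.factorial * Real.exp 1 *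
      (Real.exp x + Real.exp (-x))) (by fun_prop) 0 1) fun t _ => hpt _).trans ?_
  rw [intervalIntegral.integral_const_mul, intervalIntegral.integral_add
    (rsum_intervalIntegrable α (Φ := fun x => Real.exp x) (by fun_prop) 0 1)
    (rsum_intervalIntegrable α (Φ := fun x => Real.exp (-x)) (by fun_prop) 0 1)]
  refine mul_le_mul_of_nonneg_left (add_le_add ?_ ?_) (by positivity)
  · simpa [hα] using integral_exp_rsum_le α
  · have h := integral_exp_rsum_le (-α)
    have h2 : ∀ t, rsum (-α) t = -rsum α t := fun t => by simp [rsum]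
    simp_rw [h2] at h
    simpa [hα] using h

/-- Low moments of normalised Rademacher sums are bounded below: the second moment is `1` and,
by the fourth moment bound, large values contribute at most half of it. -/
lemma exists_moment_lower {q : ℝ} (hq : 0 < q) (hq2 : q < 2) : ∃ c : ℝ, 0 < c ∧
    ∀ (N : ℕ) (α : Fin N → ℝ), ∑ j, α j ^ 2 = 1 → c ≤ ∫ t in (0:ℝ)..1, |rsum α t| ^ q := by
  obtain ⟨K, hK, hK4⟩ := exists_moment_bound (q := 4) (by norm_num)
  -- the truncation level is chosen so that `K / M ^ 2 = 1 / 2`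
  set M : ℝ := √(2 * K) with hMdef
  have hM : 0 < M := Real.sqrt_pos.2 (by positivity)
  have hM2 : M ^ 2 = 2 * K := Real.sq_sqrt (by positivity)
  have hcq : Continuous fun x : ℝ => |x| ^ q :=
    continuous_abs.rpow_const fun _ => Or.inr hq.le
  have hc4 : Continuous fun x : ℝ => |x| ^ (4 : ℝ) :=
    continuous_abs.rpow_const fun _ => Or.inr (by norm_num)
  have hpt : ∀ x : ℝ, x ^ 2 ≤ M ^ (2 - q) * |x| ^ q + (M ^ 2)⁻¹ * |x| ^ (4 : ℝ) := by
    intro x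
    have h4 : |x| ^ (4 : ℝ) = x ^ 2 * x ^ 2 := by
      rw [show (4 : ℝ) = (4 : ℕ) by norm_num, Real.rpow_natCast,
        show |x| ^ 4 = |x| ^ 2 * |x| ^ 2 by ring, sq_abs]
    have hA : 0 ≤ M ^ (2 - q) * |x| ^ q := by positivity
    rcases le_total |x| M with h | h
    · have h3 : x ^ 2 = |x| ^ (2 - q) * |x| ^ q := by
        rw [← Real.rpow_add' (abs_nonneg x) (by norm_num)]
        norm_num
      have h5 := mul_le_mul_of_nonneg_right
        (Real.rpow_le_rpow (abs_nonneg x) h (by linarith : 0 ≤ 2 - q))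
        (Real.rpow_nonneg (abs_nonneg x) q)
      have h6 : 0 ≤ (M ^ 2)⁻¹ * |x| ^ (4 : ℝ) := by positivity
      linarith
    · have h3 : M ^ 2 ≤ x ^ 2 := by
        rw [← sq_abs x]
        exact pow_le_pow_left₀ hM.le h 2
      have h5 : x ^ 2 ≤ (M ^ 2)⁻¹ * |x| ^ (4 : ℝ) := by
        rw [h4, ← div_eq_inv_mul, le_div_iff₀ (by positivity)]
        exact mul_le_mul_of_nonneg_left h3 (sq_nonneg x)
      linarith
  refine ⟨1 / 2 / M ^ (2 - q), by positivity, fun N α hα => ?_⟩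
  have h := intervalIntegral.integral_mono_on zero_le_one
    (rsum_intervalIntegrable α (continuous_pow 2) 0 1)
    (rsum_intervalIntegrable α (Φ := fun x => M ^ (2 - q) * |x| ^ q + (M ^ 2)⁻¹ * |x| ^ (4 : ℝ))
      ((hcq.const_mul _).add (hc4.const_mul _)) 0 1) fun t _ => hpt (rsum α t)
  rw [integral_sq_rsum, hα, intervalIntegral.integral_add
    (rsum_intervalIntegrable α (hcq.const_mul _) 0 1)
    (rsum_intervalIntegrable α (hc4.const_mul _) 0 1), intervalIntegral.integral_const_mul,
    intervalIntegral.integral_const_mul] at h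
  have h4 : (M ^ 2)⁻¹ * ∫ t in (0:ℝ)..1, |rsum α t| ^ (4 : ℝ) ≤ 1 / 2 := by
    rw [hM2, ← div_eq_inv_mul, div_le_iff₀ (by positivity)]
    linarith [hK4 N α hα]
  rw [div_le_iff₀ (by positivity)]
  linarith

lemma rsum_smul {N : ℕ} (s : ℝ) (α : Fin N → ℝ) (t : ℝ) : rsum (s • α) t = s * rsum α t := by
  simp [rsum, Finset.mul_sum, mul_assoc]

/-- Homogeneity: a Rademacher sum is either zero or a multiple of a normalised one. -/
lemma rsum_normalise {q : ℝ} (hq : 0 < q) {N : ℕ} (α : Fin N → ℝ) :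
    ((∑ j, α j ^ 2) ^ (1/2 : ℝ) = 0 ∧ (∫ t in (0:ℝ)..1, |rsum α t| ^ q) ^ (1/q) = 0) ∨
    ∃ β : Fin N → ℝ, ∑ j, β j ^ 2 = 1 ∧ (∫ t in (0:ℝ)..1, |rsum α t| ^ q) ^ (1/q) =
      (∫ t in (0:ℝ)..1, |rsum β t| ^ q) ^ (1/q) * (∑ j, α j ^ 2) ^ (1/2 : ℝ) := by
  have h0 : 0 ≤ ∑ j, α j ^ 2 := Finset.sum_nonneg fun j _ => sq_nonneg _
  rcases h0.eq_or_lt with h | h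
  · left
    have hα : α = 0 := by
      ext j
      have := (Finset.sum_eq_zero_iff_of_nonneg fun j _ => sq_nonneg (α j)).1 h.symm j
        (Finset.mem_univ j)
      simpa using this
    have hz : ∀ t, rsum α t = 0 := fun t => by simp [hα, rsum]
    refine ⟨?_, ?_⟩
    · rw [← h, Real.zero_rpow (by norm_num)]
    · simp_rw [hz]
      simp [Real.zero_rpow hq.ne', Real.zero_rpow (inv_ne_zero hq.ne')]
  · right
    set s := (∑ j, α j ^ 2) ^ (1/2 : ℝ) with hs
    have hspos : 0 < s := Real.rpow_pos_of_pos h _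
    have hs2 : s ^ 2 = ∑ j, α j ^ 2 := by
      rw [hs, ← Real.sqrt_eq_rpow, Real.sq_sqrt h0]
    refine ⟨s⁻¹ • α, ?_, ?_⟩
    · simp only [Pi.smul_apply, smul_eq_mul, mul_pow]
      rw [← Finset.mul_sum, ← hs2, inv_pow, inv_mul_cancel₀ (by positivity)]
    · have hr : ∀ t, |rsum α t| ^ q = s ^ q * |rsum (s⁻¹ • α) t| ^ q := fun t => by
        rw [← Real.mul_rpow hspos.le (abs_nonneg _), rsum_smul, abs_mul, abs_inv,
          abs_of_pos hspos, mul_inv_cancel_left₀ hspos.ne']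
      simp_rw [hr]
      rw [intervalIntegral.integral_const_mul, Real.mul_rpow (by positivity)
        (intervalIntegral.integral_nonneg zero_le_one fun t _ => by positivity),
        ← Real.rpow_mul hspos.le, mul_one_div_cancel hq.ne', Real.rpow_one, mul_comm]

lemma rsum_single (q : ℝ) :
    (∫ t in (0:ℝ)..1, |∑ j : Fin 1, (fun _ => 1 : Fin 1 → ℝ) j * rademacher j t| ^ q) ^ (1/q) = 1
    := by
  simp [abs_rademacher]

/-- The moment bound makes the set of constants nonempty, so that the infimum is not the junk
value `0`. -/
lemma one_le_khintchineB {q : ℝ} (hq : 0 < q) : 1 ≤ khintchineB q := by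
  refine le_csInf ?_ ?_
  · obtain ⟨K, hK, h⟩ := exists_moment_bound hq
    refine ⟨K ^ (1/q), by positivity, fun N α => ?_⟩
    change (∫ t in (0:ℝ)..1, |rsum α t| ^ q) ^ (1/q) ≤ _
    rcases rsum_normalise hq α with ⟨h1, h2⟩ | ⟨β, hβ, h2⟩
    · rw [h1, h2, mul_zero]
    · rw [h2]
      refine mul_le_mul_of_nonneg_right (Real.rpow_le_rpow
        (intervalIntegral.integral_nonneg zero_le_one fun t _ => by positivity) (h N β hβ)
        (by positivity)) (Real.rpow_nonneg (Finset.sum_nonneg fun j _ => sq_nonneg _) _)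
  · rintro B ⟨-, hB⟩
    have := hB 1 fun _ => 1
    rw [rsum_single] at this
    simpa using this

/-- Positivity is what matters: were `khintchineA q` zero, the quotient defining `cc` would be the
junk value `0`. -/
lemma khintchineA_pos_le {q : ℝ} (hq : 0 < q) (hq2 : q < 2) :
    0 < khintchineA q ∧ khintchineA q ≤ 1 := by
  have hle : ∀ A ∈ {A : ℝ | 0 ≤ A ∧ ∀ (N : ℕ) (α : Fin N → ℝ),
      A * (∑ j, α j ^ 2) ^ (1/2 : ℝ) ≤
      (∫ t in (0:ℝ)..1, |∑ j, α j * rademacher j t| ^ q) ^ (1/q)}, A ≤ 1 := by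
    rintro A ⟨-, hA⟩
    have := hA 1 fun _ => 1
    rw [rsum_single] at this
    simpa using this
  obtain ⟨c, hc, h⟩ := exists_moment_lower hq hq2
  have hmem : c ^ (1/q) ∈ {A : ℝ | 0 ≤ A ∧ ∀ (N : ℕ) (α : Fin N → ℝ),
      A * (∑ j, α j ^ 2) ^ (1/2 : ℝ) ≤
      (∫ t in (0:ℝ)..1, |∑ j, α j * rademacher j t| ^ q) ^ (1/q)} := by
    refine ⟨by positivity, fun N α => ?_⟩
    change _ ≤ (∫ t in (0:ℝ)..1, |rsum α t| ^ q) ^ (1/q)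
    rcases rsum_normalise hq α with ⟨h1, h2⟩ | ⟨β, hβ, h2⟩
    · rw [h1, h2, mul_zero]
    · rw [h2]
      exact mul_le_mul_of_nonneg_right (Real.rpow_le_rpow hc.le (h N β hβ)
        (by positivity)) (Real.rpow_nonneg (Finset.sum_nonneg fun j _ => sq_nonneg _) _)
  exact ⟨lt_of_lt_of_le (by positivity) (le_csSup ⟨1, hle⟩ hmem), csSup_le ⟨_, hmem⟩ hle⟩

lemma one_le_cc {p p₁ p₂ : ℝ} (h1 : 0 < p₁) (h2 : 0 < p₂) (hp : 0 < p) : 1 ≤ cc p p₁ p₂ := by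
  unfold cc
  split_ifs with h
  · obtain ⟨hA, hA1⟩ := khintchineA_pos_le hp (by linarith : p < 2)
    rw [le_div_iff₀ (by positivity), one_mul]
    exact (pow_le_one₀ hA.le hA1).trans
      (one_le_mul_of_one_le_of_one_le (one_le_khintchineB h1) (one_le_khintchineB h2))
  · exact le_rfl

end Khintchine

theorem stmt8 (d d₁ : ℕ) (hd : 1 ≤ d) (hd₁ : 1 ≤ d₁)
    (p p₁ p₂ : ℝ) (h1 : 1 ≤ p₁) (h2 : 1 ≤ p₂) (hp : 0 < p)
    (hrel : 1/p₁ + 1/p₂ = 1/p)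
    -- `m ∈ C_b(ℝ^{2n})`, `n = d + d₁`
    (m : ((Fin d ⊕ Fin d₁) → ℝ) → ((Fin d ⊕ Fin d₁) → ℝ) → ℂ)
    (hmc : Continuous fun z : (((Fin d ⊕ Fin d₁) → ℝ) × ((Fin d ⊕ Fin d₁) → ℝ)) => m z.1 z.2)
    (Cm : ℝ) (hmB : ∀ ξ η, ‖m ξ η‖ ≤ Cm)
    (hm : rBMnorm (Fin d ⊕ Fin d₁) p₁ p₂ p m ≠ ⊤)
    (η₁ η₂ : Fin d₁ → ℝ) :
    rBMnorm (Fin d) p₁ p₂ p (fun ξ₁ ξ₂ => m (Sum.elim ξ₁ η₁) (Sum.elim ξ₂ η₂)) ≤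
      ENNReal.ofReal (cc p p₁ p₂) * rBMnorm (Fin d ⊕ Fin d₁) p₁ p₂ p m := by
  have hp₁ : 0 < p₁ := by linarith
  have hp₂ : 0 < p₂ := by linarith
  calc rBMnorm (Fin d) p₁ p₂ p (fun ξ₁ ξ₂ => m (Sum.elim ξ₁ η₁) (Sum.elim ξ₂ η₂))
      ≤ rBMnorm (Fin d ⊕ Fin d₁) p₁ p₂ p m :=
        le_sInf fun C hC => sInf_le
          (BMBound.restrict (C := C) hp₁ hp₂ hp hrel hmc hmB hC η₁ η₂)
    _ ≤ ENNReal.ofReal (cc p p₁ p₂) * rBMnorm (Fin d ⊕ Fin d₁) p₁ p₂ p m :=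
        le_mul_of_one_le_left zero_le
          (ENNReal.one_le_ofReal.2 (one_le_cc hp₁ hp₂ hp))
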